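/- For all u, v, x ∈ ℂ with Re(u+v) < 0, the following identity derived from the size-3 DFT holds: (2√3/(1+√3))·F_{(0,0,3)}(u,v,x) − √3·[ F_{(1/3,0,3)}(u,v,x) + F_{(−1/3,0,3)}(u,v,x) ] = F_{(0,1/3,1)}(u/9, v/9, x/3) + F_{(0,−1/3,1)}(u/9, v/9, x/3) − (2/(1+√3))·F_{(0,0,1)}(u/9, v/9, x/3). -/

import Mathlib

/-!
Put `g n = exp (u n(n+1)/18 + v n(n-1)/18 + 2πi n x/3)`. Each of the six theta functions is built
from `g`. With `A`, `B`, `C` the sums of `g` over the residue classes `0`, `1`, `-1` modulo `3`,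
the functions with `c = 3` are `A`, `B`, `C` themselves, and those with `c = 1` and
`β = 0, 1/3, -1/3` are the twisted sums `∑ g n * ω ^ n` with `ω = 1, ζ, ζ⁻¹`, `ζ = exp (2πi/3)`,
that is `A + ω B + ω⁻¹ C` (the rows of the size-three DFT). As `ζ + ζ⁻¹ = -1`, the claim becomes a
linear identity in `A`, `B`, `C` whose coefficients agree because `(√3)² = 3`. Absolute convergence
of `∑ g n`, where `Re (u + v) < 0` enters, is that of the two-variable Jacobi theta series.
-/

/-- The Ramanujan theta function with characteristics `(α, β, c)`, written with
exponential parameters `a = e^u`, `b = e^v` (so `|ab| < 1` means `Re (u+v) < 0`):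
`F_{(α,β,c)}(u,v,x) = ∑_{m∈ℤ} exp(u(m+α)(m+α+1/c)/2 + v(m+α)(m+α−1/c)/2 + 2πi(m+α)(x+β))`. -/
noncomputable def ramanujanTheta (α β c : ℝ) (u v x : ℂ) : ℂ :=
  ∑' m : ℤ, Complex.exp (u * (((m : ℂ) + α) * ((m : ℂ) + α + 1 / (c : ℂ))) / 2
    + v * (((m : ℂ) + α) * ((m : ℂ) + α - 1 / (c : ℂ))) / 2
    + 2 * Real.pi * Complex.I * ((m : ℂ) + α) * (x + β))

/-- The common summand `g n` underlying all the theta series of the identity: the `n`-th term of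
the theta series with characteristics `(0, 0, 1)` at `(u/9, v/9, x/3)`. -/
noncomputable def thetaTerm (u v x : ℂ) (n : ℤ) : ℂ :=
  Complex.exp (u * ((n : ℂ) * (n + 1)) / 18 + v * ((n : ℂ) * (n - 1)) / 18
    + 2 * Real.pi * Complex.I * n * (x / 3))

/-- `thetaTerm` is a Jacobi theta term with `τ = (u+v)/(18πi)` and `z = x/3 + (u-v)/(36πi)`;
the condition `Im τ > 0` is `Re (u+v) < 0`. -/
lemma summable_thetaTerm (u v x : ℂ) (huv : (u + v).re < 0) : Summable (thetaTerm u v x) := by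
  have hpi : (Real.pi : ℂ) ≠ 0 := by exact_mod_cast Real.pi_ne_zero
  have hI := Complex.I_ne_zero
  have him : 0 < ((((-1 / (18 * Real.pi) : ℝ) : ℂ) * ((u + v) * Complex.I))).im := by
    rw [Complex.im_ofReal_mul, Complex.mul_I_im]
    refine mul_pos_of_neg_of_neg ?_ huv
    exact div_neg_of_neg_of_pos (by norm_num) (by positivity)
  have h := (summable_jacobiTheta₂_term_iff
    (x / 3 + (u - v) / (36 * Real.pi * Complex.I)) _).2 him
  refine h.congr fun n => ?_
  unfold jacobiTheta₂_term thetaTerm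
  congr 1
  push_cast
  field_simp
  ring_nf
  simp only [Complex.I_sq]
  ring

/-- Splitting an absolutely convergent series over `ℤ` into residue classes modulo `3`. -/
lemma tsum_int_mod_three {f : ℤ → ℂ} (hf : Summable f) :
    ∑' n, f n = ∑' m : ℤ, f (3 * m) + ∑' m : ℤ, f (3 * m + 1) + ∑' m : ℤ, f (3 * m - 1) := by
  have hs : ∀ k : ℤ, Summable fun m : ℤ => f (3 * m + k) := fun k =>
    hf.comp_injective (i := fun m : ℤ => 3 * m + k) fun a b h => by
      simp only at h
      omega
  have hp : Summable (f ∘ (Int.divModEquiv 3).symm) := (Equiv.summable_iff _).2 hf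
  have h2 : ∑' m : ℤ, f (3 * m - 1) = ∑' m : ℤ, f (3 * m + 2) := by
    rw [← (Equiv.addRight (1 : ℤ)).tsum_eq]
    refine tsum_congr fun m => congrArg f ?_
    simp only [Equiv.coe_addRight]
    ring
  have h0 : Summable fun m : ℤ => f (3 * m) := by simpa using hs 0
  rw [h2, ← h0.tsum_add (hs 1), ← (h0.add (hs 1)).tsum_add (hs 2),
    ← (Int.divModEquiv 3).symm.tsum_eq f]
  refine hp.tsum_prod.trans (tsum_congr fun m => ?_)
  rw [tsum_fintype, Fin.sum_univ_three]
  simp [mul_comm]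

/-- A twist by a cube root of unity `ω` combines the three residue-class sums with weights
`1, ω, ω⁻¹`. -/
lemma tsum_mul_zpow_of_cube {f : ℤ → ℂ} (hf : Summable f) {ω : ℂ} (hω : ω ^ 3 = 1) :
    ∑' n, f n * ω ^ n = ∑' m : ℤ, f (3 * m) + ω * ∑' m : ℤ, f (3 * m + 1)
      + ω⁻¹ * ∑' m : ℤ, f (3 * m - 1) := by
  have h0 : ω ≠ 0 := by
    rintro rfl
    norm_num at hω
  have h3 : ∀ m : ℤ, ω ^ (3 * m) = 1 := fun m => by
    rw [zpow_mul, show ω ^ (3 : ℤ) = 1 from mod_cast hω, one_zpow]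
  have hn : ‖ω‖ = 1 := Complex.norm_eq_one_of_pow_eq_one hω (by norm_num)
  have hs : Summable fun n : ℤ => f n * ω ^ n := by
    refine Summable.of_norm ?_
    simpa [norm_mul, norm_zpow, hn] using hf.norm
  rw [tsum_int_mod_three hs, ← tsum_mul_left, ← tsum_mul_left]
  simp only [zpow_add₀ h0, zpow_sub₀ h0, h3, zpow_one, mul_one, one_mul, one_div, mul_comm ω,
    mul_comm ω⁻¹]

lemma theta_eq_class (u v x : ℂ) (k : ℤ) (α : ℝ) (hα : α = k / 3) :
    ramanujanTheta α 0 3 u v x = ∑' m : ℤ, thetaTerm u v x (3 * m + k) := by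
  unfold ramanujanTheta thetaTerm
  refine tsum_congr fun m => congrArg Complex.exp ?_
  subst hα
  push_cast
  ring

lemma theta_eq_twist (u v x : ℂ) (β : ℝ) :
    ramanujanTheta 0 β 1 (u / 9) (v / 9) (x / 3)
      = ∑' n : ℤ, thetaTerm u v x n * Complex.exp (2 * Real.pi * Complex.I * β) ^ n := by
  unfold ramanujanTheta thetaTerm
  refine tsum_congr fun n => ?_
  rw [← Complex.exp_int_mul, ← Complex.exp_add]
  congr 1
  push_cast
  ring

theorem ramanujanTheta_size_three (u v x : ℂ) (huv : (u + v).re < 0) :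
    (2 * (Real.sqrt 3 : ℂ) / (1 + (Real.sqrt 3 : ℂ))) * ramanujanTheta 0 0 3 u v x
      - (Real.sqrt 3 : ℂ) *
        (ramanujanTheta (1/3) 0 3 u v x + ramanujanTheta (-(1/3)) 0 3 u v x)
    = ramanujanTheta 0 (1/3) 1 (u/9) (v/9) (x/3)
      + ramanujanTheta 0 (-(1/3)) 1 (u/9) (v/9) (x/3)
      - (2 / (1 + (Real.sqrt 3 : ℂ))) * ramanujanTheta 0 0 1 (u/9) (v/9) (x/3) := by
  have hg := summable_thetaTerm u v x huv
  have hs2 : (Real.sqrt 3 : ℂ) ^ 2 = 3 := by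
    exact_mod_cast Real.sq_sqrt (by norm_num : (0 : ℝ) ≤ 3)
  have hs1 : (1 + (Real.sqrt 3 : ℂ)) ≠ 0 := by
    have : (1 + Real.sqrt 3) ≠ 0 := by positivity
    exact_mod_cast this
  obtain ⟨ζ, hζ⟩ : ∃ ζ, ζ = Complex.exp (2 * Real.pi * Complex.I / 3) := ⟨_, rfl⟩
  have hprim : IsPrimitiveRoot ζ 3 := by
    rw [hζ]
    exact_mod_cast Complex.isPrimitiveRoot_exp 3 (by norm_num)
  have hz0 : ζ ≠ 0 := hprim.ne_zero (by norm_num)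
  have hz3 : ζ ^ 3 = 1 := hprim.pow_eq_one
  have hzsum : ζ + ζ⁻¹ = -1 := by
    have h := hprim.geom_sum_eq_zero (by norm_num)
    simp only [Finset.sum_range_succ, Finset.sum_range_zero, pow_zero, pow_one, zero_add] at h
    have hinv : ζ⁻¹ = ζ ^ 2 := inv_eq_of_mul_eq_one_left (by rw [← hz3]; ring)
    rw [hinv]
    linear_combination h
  have e1 : Complex.exp (2 * Real.pi * Complex.I * ((1 / 3 : ℝ) : ℂ)) = ζ := by
    rw [hζ]
    congr 1
    push_cast
    ring
  have e2 : Complex.exp (2 * Real.pi * Complex.I * ((-(1 / 3) : ℝ) : ℂ)) = ζ⁻¹ := by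
    rw [← e1, ← Complex.exp_neg]
    congr 1
    push_cast
    ring
  have e0 : Complex.exp (2 * Real.pi * Complex.I * ((0 : ℝ) : ℂ)) = 1 := by simp
  rw [theta_eq_twist, theta_eq_twist, theta_eq_twist, e0, e1, e2,
    tsum_mul_zpow_of_cube hg hz3,
    tsum_mul_zpow_of_cube hg (ω := ζ⁻¹) (by rw [inv_pow, hz3, inv_one]),
    tsum_mul_zpow_of_cube hg (ω := 1) (one_pow 3),
    theta_eq_class u v x 0 0 (by norm_num), theta_eq_class u v x 1 (1 / 3) (by norm_num),
    theta_eq_class u v x (-1) (-(1 / 3)) (by norm_num)]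
  simp only [add_zero, ← sub_eq_add_neg, inv_inv, inv_one, one_mul]
  generalize ∑' m : ℤ, thetaTerm u v x (3 * m) = A
  generalize ∑' m : ℤ, thetaTerm u v x (3 * m + 1) = B
  generalize ∑' m : ℤ, thetaTerm u v x (3 * m - 1) = C
  have hR : A + ζ * B + ζ⁻¹ * C + (A + ζ⁻¹ * B + ζ * C) = 2 * A - (B + C) := by
    linear_combination (B + C) * hzsum
  rw [hR]
  field_simp
  linear_combination (-(B + C)) * hs2
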